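/- (Theorem 3.8: descent of the connection form and of the vertical map) Let I ⊆ H⁺ be a two-sided ideal of H with S(I) ⊆ I, let ℓ be a strong connection with connection 1-form ω, set N^bal := ⟨π(ω(I))⟩_σ and N := {x ∈ ker m : π(x) ∈ N^bal}. Then: (1) ω(I) ⊆ N, so ω descends to a well-defined k-linear map H⁺/I → (ker m)/N; and (2) c̃(N) ⊆ A ⊗ I, so the vertical map descends to a well-defined k-linear map (ker m)/N → (A ⊗ H⁺)/(A ⊗ I). -/

import Mathlib

/-!
Put `φ : A ⊗ H → A ⊗ H`, `φ(a ⊗ h) = a₍₀₎ ⊗ a₍₁₎ S(h)`. Coassociativity, the antipode axiom and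
counitality give `φ(δ(a)) = a ⊗ 1`; as `φ((a ⊗ 1) z) = δ(a) φ(z)`, this yields `φ ∘ c̃ = β`
(`phiMap_ctilde`). Hence `can ∘ σ = φ ∘ can`: the canonical map transports the Đurđević braiding
to `φ`. The map `φ` preserves `A ⊗ I`, because `I` is an `S`-stable left ideal
(`phiMap_mem_AtI`). Since `c̃(ω(h)) = 1 ⊗ h` for `h ∈ I`, the whole `σ`-closure of `π(ω(I))` is
sent by `can` into `A ⊗ I`, which is the inclusion `c̃(N) ⊆ A ⊗ I`.

The maps on quotients have the right domain and codomain because `(id ⊗ ε) ∘ c̃ = m`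
(`counit_ctilde`): it shows `m ∘ ω = 0`, and that `c̃` sends `ker m` into
`ker (id ⊗ ε) = A ⊗ H⁺`.
-/



open TensorProduct

noncomputable section

variable {k H A : Type*} [Field k] [Ring H] [HopfAlgebra k H] [Ring A] [Algebra k A]

/-- The lifted canonical map `c̃ : A ⊗ A → A ⊗ H`, `c̃(a ⊗ a') = a a'₍₀₎ ⊗ a'₍₁₎`,
for a coaction `δ : A → A ⊗ H`. -/
def ctilde (δ : A →ₐ[k] A ⊗[k] H) : A ⊗[k] A →ₗ[k] A ⊗[k] H :=
  (TensorProduct.map (LinearMap.mul' k A) LinearMap.id)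
    ∘ₗ (TensorProduct.assoc k A A H).symm.toLinearMap
    ∘ₗ (TensorProduct.map LinearMap.id δ.toLinearMap)

/-- The map `β : A ⊗ A → A ⊗ H`, `β(a ⊗ a') = a₍₀₎a' ⊗ a₍₁₎`. -/
def betaMap (δ : A →ₐ[k] A ⊗[k] H) : A ⊗[k] A →ₗ[k] A ⊗[k] H :=
  (TensorProduct.map (LinearMap.mul' k A) LinearMap.id)
    ∘ₗ (TensorProduct.assoc k A A H).symm.toLinearMap
    ∘ₗ (TensorProduct.map LinearMap.id (TensorProduct.comm k H A).toLinearMap)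
    ∘ₗ (TensorProduct.assoc k A H A).toLinearMap
    ∘ₗ (TensorProduct.map δ.toLinearMap LinearMap.id)

/-- The diagonal coaction `δ₂ : A ⊗ A → (A ⊗ A) ⊗ H`,
`δ₂(a ⊗ a') = (a₍₀₎ ⊗ a'₍₀₎) ⊗ a₍₁₎a'₍₁₎`. -/
def delta2 (δ : A →ₐ[k] A ⊗[k] H) : A ⊗[k] A →ₗ[k] (A ⊗[k] A) ⊗[k] H :=
  (TensorProduct.map LinearMap.id (LinearMap.mul' k H))
    ∘ₗ (TensorProduct.tensorTensorTensorComm k A H A H).toLinearMap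
    ∘ₗ (TensorProduct.map δ.toLinearMap δ.toLinearMap)

/-- `J ⊆ A ⊗ A`: the k-span of the balanced relations `ab ⊗ a' − a ⊗ ba'`
with `b` a coinvariant element (`δ b = b ⊗ 1`). -/
def Jrel (δ : A →ₐ[k] A ⊗[k] H) : Submodule k (A ⊗[k] A) :=
  Submodule.span k {x | ∃ a a' b : A, δ b = b ⊗ₜ[k] (1 : H) ∧
    x = (a * b) ⊗ₜ[k] a' - a ⊗ₜ[k] (b * a')}

/-- `A ⊗ I`: the k-span of `{a ⊗ x : a ∈ A, x ∈ I}` inside `A ⊗ H`. -/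
def AtI (A : Type*) [Ring A] [Algebra k A] (I : Submodule k H) :
    Submodule k (A ⊗[k] H) :=
  Submodule.span k {z | ∃ a : A, ∃ h ∈ I, z = a ⊗ₜ[k] h}

/-- Counitality of the coaction `δ` : `(id ⊗ ε) ∘ δ = id` under `A ⊗ k ≅ A`. -/
def Counital (δ : A →ₐ[k] A ⊗[k] H) : Prop :=
  ∀ a : A, (TensorProduct.rid k A)
    (TensorProduct.map LinearMap.id (Coalgebra.counit (R := k) (A := H)) (δ a)) = a

/-- Coassociativity of the coaction `δ` : `(δ ⊗ id) ∘ δ = (id ⊗ Δ) ∘ δ`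
up to the tensor associator. -/
def Coassoc (δ : A →ₐ[k] A ⊗[k] H) : Prop :=
  ∀ a : A, (TensorProduct.assoc k A H H)
      (TensorProduct.map δ.toLinearMap LinearMap.id (δ a))
    = TensorProduct.map LinearMap.id (Coalgebra.comul (R := k) (A := H)) (δ a)

/-- The `σ`-closure `⟨W⟩_σ = Σ_{n ≥ 0} σⁿ(W)` of a subspace `W`. -/
def sclosure {M : Type*} [AddCommGroup M] [Module k M]
    (σ : M →ₗ[k] M) (W : Submodule k M) : Submodule k M :=
  ⨆ n : ℕ, Submodule.map (σ ^ n) W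

/-- The map `φ(a ⊗ h) = a₍₀₎ ⊗ a₍₁₎ S(h)`, written as the product `δ(a) (1 ⊗ S(h))` in the algebra
`A ⊗ H`. It is the braiding `σ` transported along the canonical map. -/
def phiMap (δ : A →ₐ[k] A ⊗[k] H) : A ⊗[k] H →ₗ[k] A ⊗[k] H :=
  LinearMap.mul' k (A ⊗[k] H) ∘ₗ
    TensorProduct.map δ.toLinearMap
      ((Algebra.TensorProduct.includeRight (R := k) (A := A) (B := H)).toLinearMap ∘ₗ
        HopfAlgebra.antipode k (A := H))

lemma phiMap_tmul (δ : A →ₐ[k] A ⊗[k] H) (a : A) (h : H) :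
    phiMap δ (a ⊗ₜ[k] h) = δ a * ((1 : A) ⊗ₜ[k] HopfAlgebra.antipode k h) := by
  simp [phiMap]

lemma ctilde_tmul (δ : A →ₐ[k] A ⊗[k] H) (a a' : A) :
    ctilde δ (a ⊗ₜ[k] a') = (a ⊗ₜ[k] (1 : H)) * δ a' := by
  simp only [ctilde, LinearMap.comp_apply, TensorProduct.map_tmul, LinearMap.id_apply,
    AlgHom.toLinearMap_apply]
  induction δ a' using TensorProduct.induction_on with
  | zero => simp
  | tmul x y => simp
  | add x y hx hy => simp only [TensorProduct.tmul_add, map_add, hx, hy, mul_add]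

lemma betaMap_tmul (δ : A →ₐ[k] A ⊗[k] H) (a a' : A) :
    betaMap δ (a ⊗ₜ[k] a') = δ a * (a' ⊗ₜ[k] (1 : H)) := by
  simp only [betaMap, LinearMap.comp_apply, TensorProduct.map_tmul, LinearMap.id_apply,
    AlgHom.toLinearMap_apply]
  induction δ a using TensorProduct.induction_on with
  | zero => simp
  | tmul x y => simp
  | add x y hx hy => simp only [TensorProduct.add_tmul, map_add, hx, hy, add_mul]

/-- `φ` is left linear over `A ⊗ 1` along `δ`, since `δ` is multiplicative. -/
lemma phiMap_mul (δ : A →ₐ[k] A ⊗[k] H) (a : A) (z : A ⊗[k] H) :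
    phiMap δ ((a ⊗ₜ[k] (1 : H)) * z) = δ a * phiMap δ z := by
  induction z using TensorProduct.induction_on with
  | zero => simp
  | tmul x y => simp [phiMap_tmul, mul_assoc]
  | add x y hx hy => simp only [map_add, hx, hy, mul_add]

/-- `a₍₀₎ ⊗ a₍₁₎ S(a₍₂₎) = a ⊗ 1`. -/
lemma phiMap_coaction (δ : A →ₐ[k] A ⊗[k] H) (hcu : Counital δ) (hca : Coassoc δ) (a : A) :
    phiMap δ (δ a) = a ⊗ₜ[k] (1 : H) := by
  -- `φ` factors through `δ ⊗ id`, so that coassociativity applies to `φ (δ a)`.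
  have h1 : ∀ z : A ⊗[k] H, phiMap δ z =
      TensorProduct.map LinearMap.id
        (LinearMap.mul' k H ∘ₗ LinearMap.lTensor H (HopfAlgebra.antipode k (A := H)))
        (TensorProduct.assoc k A H H
          (TensorProduct.map δ.toLinearMap LinearMap.id z)) := by
    intro z
    induction z using TensorProduct.induction_on with
    | zero => simp
    | tmul x y =>
      rw [phiMap_tmul, TensorProduct.map_tmul, AlgHom.toLinearMap_apply]
      induction δ x using TensorProduct.induction_on with
      | zero => simp
      | tmul x y => simp
      | add x y hx hy => simp only [map_add, TensorProduct.add_tmul, hx, hy, add_mul]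
    | add x y hx hy => simp only [map_add, hx, hy]
  rw [h1, hca a]
  have h2 : ∀ z : A ⊗[k] H, TensorProduct.map LinearMap.id
        (LinearMap.mul' k H ∘ₗ LinearMap.lTensor H (HopfAlgebra.antipode k (A := H)))
        (TensorProduct.map LinearMap.id (Coalgebra.comul (R := k) (A := H)) z) =
      (TensorProduct.rid k A
        (TensorProduct.map LinearMap.id (Coalgebra.counit (R := k) (A := H)) z))
          ⊗ₜ[k] (1 : H) := by
    intro z
    induction z using TensorProduct.induction_on with
    | zero => simp
    | tmul x y =>
      simp [HopfAlgebra.mul_antipode_lTensor_comul_apply, Algebra.algebraMap_eq_smul_one,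
        TensorProduct.smul_tmul]
    | add x y hx hy => simp only [map_add, hx, hy, TensorProduct.add_tmul]
  rw [h2, hcu a]

lemma phiMap_ctilde (δ : A →ₐ[k] A ⊗[k] H) (hcu : Counital δ) (hca : Coassoc δ)
    (x : A ⊗[k] A) : phiMap δ (ctilde δ x) = betaMap δ x := by
  induction x using TensorProduct.induction_on with
  | zero => simp
  | tmul a a' =>
    rw [ctilde_tmul, betaMap_tmul, phiMap_mul, phiMap_coaction δ hcu hca]
  | add x y hx hy => simp only [map_add, hx, hy]

/-- `φ(a ⊗ h) = a₍₀₎ ⊗ a₍₁₎ S(h)` with `S(h) ∈ I` and `I` a left ideal. -/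
lemma phiMap_mem_AtI (δ : A →ₐ[k] A ⊗[k] H) (I : Submodule k H)
    (hIl : ∀ h : H, ∀ x ∈ I, h * x ∈ I)
    (hIS : ∀ x ∈ I, HopfAlgebra.antipode (R := k) x ∈ I)
    {z : A ⊗[k] H} (hz : z ∈ AtI A I) : phiMap δ z ∈ AtI A I := by
  induction hz using Submodule.span_induction with
  | mem z hz =>
    obtain ⟨a, h, hh, rfl⟩ := hz
    rw [phiMap_tmul]
    induction δ a using TensorProduct.induction_on with
    | zero => simp
    | tmul x y =>
      rw [Algebra.TensorProduct.tmul_mul_tmul]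
      exact Submodule.subset_span ⟨_, _, hIl _ _ (hIS _ hh), rfl⟩
    | add x y hx hy => rw [add_mul]; exact add_mem hx hy
  | zero => simp
  | add x y _ _ hx hy => rw [map_add]; exact add_mem hx hy
  | smul c x _ hx => rw [map_smul]; exact Submodule.smul_mem _ _ hx

/-- `(id ⊗ ε) ∘ c̃ = m`. -/
lemma counit_ctilde (δ : A →ₐ[k] A ⊗[k] H) (hcu : Counital δ) (x : A ⊗[k] A) :
    TensorProduct.rid k A (TensorProduct.map LinearMap.id
      (Coalgebra.counit (R := k) (A := H)) (ctilde δ x)) = LinearMap.mul' k A x := by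
  induction x using TensorProduct.induction_on with
  | zero => simp
  | tmul a a' =>
    have h : ∀ z : A ⊗[k] H, TensorProduct.rid k A (TensorProduct.map LinearMap.id
        (Coalgebra.counit (R := k) (A := H)) ((a ⊗ₜ[k] (1 : H)) * z)) =
        a * TensorProduct.rid k A (TensorProduct.map LinearMap.id
        (Coalgebra.counit (R := k) (A := H)) z) := by
      intro z
      induction z using TensorProduct.induction_on with
      | zero => simp
      | tmul x y => simp
      | add x y hx hy => simp only [map_add, hx, hy, mul_add]
    rw [ctilde_tmul, h, hcu a', LinearMap.mul'_apply]
  | add x y hx hy => simp only [map_add, hx, hy]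

/-- The projection `z ↦ z - (id ⊗ ε)(z) ⊗ 1` takes values in `A ⊗ H⁺`. -/
lemma sub_counit_mem_AtI (z : A ⊗[k] H) :
    z - (TensorProduct.rid k A (TensorProduct.map LinearMap.id
      (Coalgebra.counit (R := k) (A := H)) z)) ⊗ₜ[k] (1 : H)
      ∈ AtI A (LinearMap.ker (Coalgebra.counit (R := k) (A := H))) := by
  induction z using TensorProduct.induction_on with
  | zero => simp
  | tmul a h =>
    refine Submodule.subset_span ⟨a, h - Coalgebra.counit (R := k) h • (1 : H), ?_, ?_⟩
    · simp
    · simp [TensorProduct.tmul_sub, TensorProduct.smul_tmul]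
  | add x y hx hy =>
    simp only [map_add, TensorProduct.add_tmul]
    rw [add_sub_add_comm]
    exact add_mem hx hy

lemma ctilde_mem_AtI_of_mem_ker (δ : A →ₐ[k] A ⊗[k] H) (hcu : Counital δ) (x : A ⊗[k] A)
    (hx : x ∈ LinearMap.ker (LinearMap.mul' k A)) :
    ctilde δ x ∈ AtI A (LinearMap.ker (Coalgebra.counit (R := k) (A := H))) := by
  have h := sub_counit_mem_AtI (ctilde δ x)
  rwa [counit_ctilde δ hcu, LinearMap.mem_ker.mp hx, TensorProduct.zero_tmul, sub_zero] at h

/-- Theorem 3.8, descent of the connection form and of the vertical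
map: `ω(I) ⊆ N`, so `ω` descends to `H⁺/I → (ker m)/N`; and `c̃(N) ⊆ A ⊗ I`,
so the vertical map descends to `(ker m)/N → (A ⊗ H⁺)/(A ⊗ I)`. -/
theorem stmt13 (δ : A →ₐ[k] A ⊗[k] H) (hcu : Counital δ) (hca : Coassoc δ)
    (can : ((A ⊗[k] A) ⧸ Jrel δ) →ₗ[k] A ⊗[k] H)
    (hcan : ∀ x : A ⊗[k] A, can ((Jrel δ).mkQ x) = ctilde δ x)
    (hbij : Function.Bijective can)
    (βbar : ((A ⊗[k] A) ⧸ Jrel δ) →ₗ[k] A ⊗[k] H)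
    (hβ : ∀ x : A ⊗[k] A, βbar ((Jrel δ).mkQ x) = betaMap δ x)
    (σ : ((A ⊗[k] A) ⧸ Jrel δ) →ₗ[k] (A ⊗[k] A) ⧸ Jrel δ)
    (hσ : ∀ y : (A ⊗[k] A) ⧸ Jrel δ, can (σ y) = βbar y)
    (ℓ : H →ₗ[k] A ⊗[k] A)
    (hℓ1 : ℓ 1 = (1 : A) ⊗ₜ[k] (1 : A))
    (hℓ2 : ∀ h : H,
      TensorProduct.map LinearMap.id δ.toLinearMap (ℓ h)
        = (TensorProduct.assoc k A A H)
            (TensorProduct.map ℓ LinearMap.id (Coalgebra.comul (R := k) h)))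
    (hℓ3 : ∀ h : H, ctilde δ (ℓ h) = (1 : A) ⊗ₜ[k] h)
    (I : Submodule k H)
    (hI : I ≤ LinearMap.ker (Coalgebra.counit (R := k) (A := H)))
    (hIl : ∀ h : H, ∀ x ∈ I, h * x ∈ I)
    (hIr : ∀ h : H, ∀ x ∈ I, x * h ∈ I)
    (hIS : ∀ x ∈ I, HopfAlgebra.antipode (R := k) x ∈ I) :
    ∀ Nbal : Submodule k ((A ⊗[k] A) ⧸ Jrel δ),
      Nbal = sclosure σ
        (Submodule.map (Jrel δ).mkQ
          (Submodule.span k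
            ((fun h : H => ℓ h - Coalgebra.counit (R := k) h • ((1 : A) ⊗ₜ[k] (1 : A)))
              '' (I : Set H)))) →
    ∀ N : Submodule k (A ⊗[k] A),
      N = LinearMap.ker (LinearMap.mul' k A) ⊓ Submodule.comap (Jrel δ).mkQ Nbal →
      (∀ h ∈ I,
        ℓ h - Coalgebra.counit (R := k) h • ((1 : A) ⊗ₜ[k] (1 : A)) ∈ N) ∧
      (∃ ωbar :
          (↥(LinearMap.ker (Coalgebra.counit (R := k) (A := H))) ⧸
            Submodule.comap
              (LinearMap.ker (Coalgebra.counit (R := k) (A := H))).subtype I)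
          →ₗ[k]
          (↥(LinearMap.ker (LinearMap.mul' k A)) ⧸
            Submodule.comap (LinearMap.ker (LinearMap.mul' k A)).subtype N),
        ∀ (h : ↥(LinearMap.ker (Coalgebra.counit (R := k) (A := H))))
          (w : ↥(LinearMap.ker (LinearMap.mul' k A))),
          (w : A ⊗[k] A)
              = ℓ (h : H) - Coalgebra.counit (R := k) (h : H) • ((1 : A) ⊗ₜ[k] (1 : A)) →
          ωbar (Submodule.Quotient.mk h) = Submodule.Quotient.mk w) ∧
      (∀ x ∈ N, ctilde δ x ∈ AtI A I) ∧
      (∃ verbar :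
          (↥(LinearMap.ker (LinearMap.mul' k A)) ⧸
            Submodule.comap (LinearMap.ker (LinearMap.mul' k A)).subtype N)
          →ₗ[k]
          (↥(AtI A (LinearMap.ker (Coalgebra.counit (R := k) (A := H)))) ⧸
            Submodule.comap
              (AtI A (LinearMap.ker (Coalgebra.counit (R := k) (A := H)))).subtype
              (AtI A I)),
        ∀ (x : ↥(LinearMap.ker (LinearMap.mul' k A)))
          (v : ↥(AtI A (LinearMap.ker (Coalgebra.counit (R := k) (A := H))))),
          (v : A ⊗[k] H) = ctilde δ (x : A ⊗[k] A) →
          verbar (Submodule.Quotient.mk x) = Submodule.Quotient.mk v) := by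
  intro Nbal hNbal N hN
  -- The connection form as a linear map.
  let ω : H →ₗ[k] A ⊗[k] A :=
    ℓ - (Coalgebra.counit (R := k) (A := H)).smulRight ((1 : A) ⊗ₜ[k] (1 : A))
  have hω : ∀ h, ω h = ℓ h - Coalgebra.counit (R := k) h • ((1 : A) ⊗ₜ[k] (1 : A)) := by
    intro h; simp [ω]
  have hωker : ∀ h, ω h ∈ LinearMap.ker (LinearMap.mul' k A) := by
    intro h
    have h1 := counit_ctilde δ hcu (ℓ h)
    rw [hℓ3] at h1
    simp only [TensorProduct.map_tmul, LinearMap.id_apply, TensorProduct.rid_tmul] at h1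
    rw [LinearMap.mem_ker, hω, map_sub, ← h1]
    simp
  have hωN : ∀ h ∈ I, ω h ∈ N := by
    intro h hh
    rw [hN]
    refine ⟨hωker h, ?_⟩
    rw [SetLike.mem_coe, Submodule.mem_comap, hNbal]
    refine Submodule.mem_iSup_of_mem 0 ?_
    rw [pow_zero, Module.End.one_eq_id, Submodule.map_id]
    exact Submodule.mem_map_of_mem (Submodule.subset_span ⟨h, hh, (hω h).symm⟩)
  have hcanσ : ∀ y, can (σ y) = phiMap δ (can y) := by
    intro y
    obtain ⟨x, rfl⟩ := (Jrel δ).mkQ_surjective y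
    rw [hσ, hβ, hcan, phiMap_ctilde δ hcu hca]
  -- The preimage of `A ⊗ I` under `can` is `σ`-stable and contains `π(ω(I))`.
  have hNb : Nbal ≤ Submodule.comap can (AtI A I) := by
    rw [hNbal]
    refine iSup_le fun n => ?_
    rw [Submodule.map_le_iff_le_comap]
    intro y hy
    rw [Submodule.mem_comap, Submodule.mem_comap]
    induction n with
    | zero =>
      rw [pow_zero, Module.End.one_apply]
      refine (Submodule.map_le_iff_le_comap.mpr (Submodule.span_le.mpr ?_) :
        _ ≤ Submodule.comap can (AtI A I)) hy
      rintro _ ⟨h, hh, rfl⟩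
      have h0 : Coalgebra.counit (R := k) h = 0 := hI hh
      simp only [SetLike.mem_coe, Submodule.mem_comap]
      rw [hcan, h0, zero_smul, sub_zero, hℓ3]
      exact Submodule.subset_span ⟨1, h, hh, rfl⟩
    | succ n ih =>
      rw [pow_succ', Module.End.mul_apply, hcanσ]
      exact phiMap_mem_AtI δ I hIl hIS ih
  have hcN : ∀ x ∈ N, ctilde δ x ∈ AtI A I := by
    intro x hx
    rw [hN] at hx
    rw [← hcan]
    exact hNb hx.2
  refine ⟨fun h hh => hω h ▸ hωN h hh, ?_, hcN, ?_⟩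
  · refine ⟨Submodule.mapQ _ _ ((ω.codRestrict _ hωker) ∘ₗ Submodule.subtype _) ?_, ?_⟩
    · intro h hh
      exact hωN _ hh
    · intro h w hw
      refine (Submodule.mapQ_apply _ _ _ h).trans (congrArg _ ?_)
      exact Subtype.ext ((hω _).trans hw.symm)
  · refine ⟨Submodule.mapQ _ _ ((ctilde δ).restrict
      fun x hx => ctilde_mem_AtI_of_mem_ker δ hcu x hx) ?_, ?_⟩
    · intro x hx
      exact hcN _ hx
    · intro x v hv
      refine (Submodule.mapQ_apply _ _ _ x).trans (congrArg _ ?_)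
      exact Subtype.ext hv.symm

end
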